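/- Let N ≥ 1, s ∈ (0,1), let G be a Young function satisfying the growth condition with exponents 1 < p⁻ ≤ p⁺ < ∞, and let Ω ⊆ ℝ^N be a nonempty open set with |Ω| < ∞ and δ(x) := dist(x, ∂Ω). Assume: (i) there is c₁ > 0 such that ∫_{ℝ^N∖Ω} |x−y|^{−(N+sp⁻)} dy ≤ c₁ δ(x)^{−sp⁻} for every x ∈ Ω, and (ii) there is c₂ > 0 such that ∫_Ω G(u(x)/δ(x)^s) dx ≤ c₂ ∬_{Ω×Ω} G(|u(x)−u(y)|/|x−y|^s) |x−y|^{−N} dx dy for every nonnegative u ∈ C_c^∞(Ω). Then there exists C > 0 such that for every nonnegative u ∈ C_c^∞(Ω), ∬_{Ω*×Ω*} G(|u*(x)−u*(y)|/|x−y|^s) |x−y|^{−N} dx dy ≤ C ∬_{Ω×Ω} G(|u(x)−u(y)|/|x−y|^s) |x−y|^{−N} dx dy. -/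

import Mathlib

open MeasureTheory Metric Set Filter
open scoped ENNReal Topology

/-- The volume of the unit ball in `ℝ^N`. -/
noncomputable def ballVol (N : ℕ) : ℝ≥0∞ :=
  volume (Metric.ball (0 : EuclideanSpace ℝ (Fin N)) 1)

/-- The symmetric rearrangement `Ω*` of a set: the open ball centered at the origin
with the same volume. -/
noncomputable def rearrangeSet {N : ℕ} (Ω : Set (EuclideanSpace ℝ (Fin N))) :
    Set (EuclideanSpace ℝ (Fin N)) :=
  Metric.ball 0 (((volume Ω).toReal / (ballVol N).toReal) ^ ((N : ℝ)⁻¹))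

/-- The symmetric decreasing rearrangement `u*` of a nonnegative function:
`u* x = sup {t > 0 : |{u > t}| > α_N |x|^N}` (with `sup ∅ = 0`). -/
noncomputable def rearrangeFun {N : ℕ} (u : EuclideanSpace ℝ (Fin N) → ℝ)
    (x : EuclideanSpace ℝ (Fin N)) : ℝ :=
  sSup {t : ℝ | 0 < t ∧ ballVol N * ENNReal.ofReal (‖x‖ ^ N) < volume {y | t < u y}}

/-- `G` is a Young function with right-continuous nondecreasing density `g`. -/
structure IsYoungPair (G g : ℝ → ℝ) : Prop where
  g_zero : g 0 = 0
  g_pos : ∀ t > 0, 0 < g t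
  g_mono : MonotoneOn g (Set.Ici 0)
  g_rightCont : ∀ t ≥ 0, ContinuousWithinAt g (Set.Ici t) t
  g_tendsto : Filter.Tendsto g Filter.atTop Filter.atTop
  G_eq : ∀ t ≥ 0, G t = ∫ τ in (0:ℝ)..t, g τ

/-- The growth condition `pm ≤ t g(t)/G(t) ≤ pp` with exponents `1 < pm ≤ pp < ∞`. -/
def GrowthCond (G g : ℝ → ℝ) (pm pp : ℝ) : Prop :=
  1 < pm ∧ pm ≤ pp ∧ ∀ t > 0, pm * G t ≤ t * g t ∧ t * g t ≤ pp * G t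

/-- The fractional Orlicz–Sobolev seminorm
`∬_{A×B} G(|u x − u y|/|x−y|^s) |x−y|^{−N} dx dy`. -/
noncomputable def fracSeminorm {N : ℕ} (s : ℝ) (G : ℝ → ℝ)
    (u : EuclideanSpace ℝ (Fin N) → ℝ) (A B : Set (EuclideanSpace ℝ (Fin N))) : ℝ≥0∞ :=
  ∫⁻ x in A, ∫⁻ y in B,
    ENNReal.ofReal (G (|u x - u y| / dist x y ^ s) / dist x y ^ (N : ℝ))

/-- `u ∈ C_c^∞(Ω)`. -/
def IsTestFun {N : ℕ} (Ω : Set (EuclideanSpace ℝ (Fin N)))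
    (u : EuclideanSpace ℝ (Fin N) → ℝ) : Prop :=
  ContDiff ℝ (⊤ : ℕ∞) u ∧ HasCompactSupport u ∧ tsupport u ⊆ Ω

/-!
For measurable sets `E ⊆ F` of finite measure, the measure of the pairs `(x, y)` with `x ∈ E`,
`y ∉ F` and `|x - y| < ρ` becomes, up to dilating `ρ` by a dimensional factor, smallest when `E` and
`F` are concentric balls. The layer cake formula over pairs of superlevel sets of `u`, together with
the representation `G(a) = ∫ (a - σ)⁺ dg(σ)`, turns this into a comparison of the integral of
`G(|u* x - u* y| / c)` over `|x - y| < ρ` with the one of `G(|u x - u y| / c)` over `|x - y| < Λρ`.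
By the growth condition `G(a / r^s) / r^N` is comparable to the average
`∫_{ρ > r} G(a / ρ^s) ρ^(-N-1) dρ` over scales, so integrating over `ρ` bounds the seminorm of `u*`
on the whole space by that of `u`. Finally, for `u` vanishing outside `Ω`, the interaction of `Ω`
with its complement is at most `c₁ ∫_Ω G(u / δ^s)`, which the Hardy inequality absorbs.
-/

namespace IsYoungPair

variable {G g : ℝ → ℝ}

lemma intervalIntegrable (hY : IsYoungPair G g) {a b : ℝ} (ha : 0 ≤ a) (hb : 0 ≤ b) :
    IntervalIntegrable g volume a b :=
  (hY.g_mono.mono fun _ hx => (le_min ha hb).trans hx.1).intervalIntegrable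

lemma map_zero (hY : IsYoungPair G g) : G 0 = 0 := by
  simp [hY.G_eq 0 le_rfl]

lemma g_nonneg (hY : IsYoungPair G g) {t : ℝ} (ht : 0 ≤ t) : 0 ≤ g t := by
  rcases ht.eq_or_lt with rfl | h
  · exact hY.g_zero.ge
  · exact (hY.g_pos t h).le

lemma monotoneOn (hY : IsYoungPair G g) : MonotoneOn G (Ici 0) := by
  intro a ha b hb hab
  have ha' : 0 ≤ a := ha
  have hb' : 0 ≤ b := hb
  rw [hY.G_eq a ha, hY.G_eq b hb,
    ← intervalIntegral.integral_add_adjacent_intervals (hY.intervalIntegrable le_rfl ha')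
      (hY.intervalIntegrable ha' hb')]
  have := intervalIntegral.integral_nonneg (μ := volume) hab
    fun x hx => hY.g_nonneg (ha'.trans hx.1)
  linarith

lemma nonneg (hY : IsYoungPair G g) {t : ℝ} (ht : 0 ≤ t) : 0 ≤ G t := by
  simpa [hY.map_zero] using hY.monotoneOn (mem_Ici.2 le_rfl) (mem_Ici.2 ht) ht

lemma hasDerivWithinAt (hY : IsYoungPair G g) {t : ℝ} (ht : 0 ≤ t) :
    HasDerivWithinAt G (g t) (Ici t) t := by
  have hmeas : StronglyMeasurableAtFilter g (𝓝[Ioi t] t) := by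
    refine ⟨Ioc t (t + 1), Ioc_mem_nhdsGT (by linarith), ?_⟩
    exact ((intervalIntegrable_iff_integrableOn_Ioc_of_le (by linarith)).1
      (hY.intervalIntegrable ht (by linarith : (0 : ℝ) ≤ t + 1))).aestronglyMeasurable
  have h := intervalIntegral.integral_hasDerivWithinAt_right (s := Ici t) (t := Ioi t)
    (hY.intervalIntegrable le_rfl ht) hmeas ((hY.g_rightCont t ht).mono Ioi_subset_Ici_self)
  exact h.congr (fun x hx => hY.G_eq x (ht.trans hx)) (hY.G_eq t ht)

lemma continuousOn_Icc (hY : IsYoungPair G g) {a b : ℝ} (ha : 0 ≤ a) :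
    ContinuousOn G (Icc a b) := by
  rcases le_or_gt a b with hab | hab
  · have hb : 0 ≤ b := ha.trans hab
    have h := intervalIntegral.continuousOn_primitive_interval
      ((intervalIntegrable_iff').1 (hY.intervalIntegrable (le_refl (0 : ℝ)) hb))
    rw [uIcc_of_le hb] at h
    exact (h.congr fun x hx => hY.G_eq x hx.1).mono (Icc_subset_Icc_left ha)
  · simp [Icc_eq_empty_of_lt hab]

lemma hasDerivWithinAt_mul_rpow_neg (hY : IsYoungPair G g) (q : ℝ) {t : ℝ} (ht : 0 < t) :
    HasDerivWithinAt (fun x => G x * x ^ (-q)) (t ^ (-q - 1) * (t * g t - q * G t)) (Ici t) t := by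
  have h := (hY.hasDerivWithinAt ht.le).mul
    (Real.hasDerivAt_rpow_const (x := t) (p := -q) (Or.inl ht.ne')).hasDerivWithinAt
  refine h.congr_deriv ?_
  have : t ^ (-q) = t ^ (-q - 1) * t := by
    rw [← Real.rpow_add_one ht.ne']; congr 1; ring
  rw [this]; ring

lemma continuousOn_mul_rpow_neg (hY : IsYoungPair G g) (q : ℝ) {a b : ℝ} (ha : 0 < a) :
    ContinuousOn (fun x => G x * x ^ (-q)) (Icc a b) :=
  (hY.continuousOn_Icc ha.le).mul fun _ hx =>
    (Real.continuousAt_rpow_const _ _ (Or.inl (ha.trans_le hx.1).ne')).continuousWithinAt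

variable {pm pp : ℝ}

lemma mul_rpow_neg_mono (hY : IsYoungPair G g) (hG : GrowthCond G g pm pp) {a b : ℝ}
    (ha : 0 < a) (hab : a ≤ b) : G a * a ^ (-pm) ≤ G b * b ^ (-pm) := by
  have h := image_le_of_deriv_right_le_deriv_boundary (a := a) (b := b)
    (f := fun _ => G a * a ^ (-pm)) (f' := fun _ => 0) (B := fun x => G x * x ^ (-pm))
    continuousOn_const (fun x _ => hasDerivWithinAt_const _ _ _) le_rfl
    (hY.continuousOn_mul_rpow_neg pm ha)
    (fun x hx => hY.hasDerivWithinAt_mul_rpow_neg pm (ha.trans_le hx.1))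
    (fun x hx => by
      have hx0 : 0 < x := ha.trans_le hx.1
      have := (hG.2.2 x hx0).1
      exact mul_nonneg (Real.rpow_nonneg hx0.le _) (by linarith))
  exact h ⟨hab, le_rfl⟩

lemma mul_rpow_neg_anti (hY : IsYoungPair G g) (hG : GrowthCond G g pm pp) {a b : ℝ}
    (ha : 0 < a) (hab : a ≤ b) : G b * b ^ (-pp) ≤ G a * a ^ (-pp) := by
  have h := image_le_of_deriv_right_le_deriv_boundary (a := a) (b := b)
    (B := fun _ => G a * a ^ (-pp)) (B' := fun _ => 0) (f := fun x => G x * x ^ (-pp))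
    (hY.continuousOn_mul_rpow_neg pp ha)
    (fun x hx => hY.hasDerivWithinAt_mul_rpow_neg pp (ha.trans_le hx.1)) le_rfl
    continuousOn_const (fun x _ => hasDerivWithinAt_const _ _ _)
    (fun x hx => by
      have hx0 : 0 < x := ha.trans_le hx.1
      have := (hG.2.2 x hx0).2
      exact mul_nonpos_of_nonneg_of_nonpos (Real.rpow_nonneg hx0.le _) (by linarith))
  exact h ⟨hab, le_rfl⟩

lemma map_mul_le_rpow_mul_of_le_one (hY : IsYoungPair G g) (hG : GrowthCond G g pm pp) {l t : ℝ}
    (hl : 0 < l) (hl1 : l ≤ 1) (ht : 0 ≤ t) : G (l * t) ≤ l ^ pm * G t := by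
  rcases ht.eq_or_lt with rfl | ht
  · simp [hY.map_zero]
  have h := hY.mul_rpow_neg_mono hG (mul_pos hl ht) (mul_le_of_le_one_left ht.le hl1)
  rw [Real.mul_rpow hl.le ht.le, Real.rpow_neg hl.le, ← mul_assoc] at h
  have h2 := le_of_mul_le_mul_right h (Real.rpow_pos_of_pos ht (-pm))
  rwa [← div_eq_mul_inv, div_le_iff₀ (Real.rpow_pos_of_pos hl _), mul_comm (G t)] at h2

lemma map_mul_le_rpow_mul_of_one_le (hY : IsYoungPair G g) (hG : GrowthCond G g pm pp) {l t : ℝ}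
    (hl1 : 1 ≤ l) (ht : 0 ≤ t) : G (l * t) ≤ l ^ pp * G t := by
  have hl : 0 < l := by linarith
  rcases ht.eq_or_lt with rfl | ht
  · simp [hY.map_zero]
  have h := hY.mul_rpow_neg_anti hG ht (le_mul_of_one_le_left ht.le hl1)
  rw [Real.mul_rpow hl.le ht.le, Real.rpow_neg hl.le, ← mul_assoc] at h
  have h2 := le_of_mul_le_mul_right h (Real.rpow_pos_of_pos ht (-pp))
  rwa [← div_eq_mul_inv, div_le_iff₀ (Real.rpow_pos_of_pos hl _), mul_comm (G t)] at h2

lemma aemeasurable_comp (hY : IsYoungPair G g) {α : Type*} [MeasurableSpace α] {μ : Measure α}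
    {f : α → ℝ} (hf : AEMeasurable f μ) (hf0 : ∀ᵐ x ∂μ, 0 ≤ f x) :
    AEMeasurable (fun x => G (f x)) μ := by
  have hmono : Monotone fun t => G (max t 0) := fun a b hab =>
    hY.monotoneOn (mem_Ici.2 (le_max_right _ _)) (mem_Ici.2 (le_max_right _ _))
      (max_le_max_right _ hab)
  refine (hmono.measurable.comp_aemeasurable hf).congr ?_
  filter_upwards [hf0] with x hx
  simp [max_eq_left hx]

/-- The density `g`, extended by `0` to the negative half-line, as a Stieltjes function; its
measure is the second derivative of `G`. -/
noncomputable def stieltjes (hY : IsYoungPair G g) : StieltjesFunction ℝ where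
  toFun t := g (max t 0)
  mono' _ _ hab :=
    hY.g_mono (mem_Ici.2 (le_max_right _ _)) (mem_Ici.2 (le_max_right _ _))
      (max_le_max_right _ hab)
  right_continuous' t :=
    (hY.g_rightCont _ (le_max_right t 0)).comp (f := fun x => max x 0) (by fun_prop)
      fun _ hx => mem_Ici.2 (max_le_max_right _ hx)

lemma stieltjes_measure_Iic (hY : IsYoungPair G g) (t : ℝ) :
    hY.stieltjes.measure (Iic t) = ENNReal.ofReal (g (max t 0)) := by
  have hbot : Tendsto hY.stieltjes atBot (𝓝 0) := by
    refine tendsto_const_nhds.congr' ?_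
    filter_upwards [eventually_le_atBot 0] with x hx
    change 0 = g (max x 0)
    rw [max_eq_right hx, hY.g_zero]
  rw [StieltjesFunction.measure_Iic _ hbot, sub_zero]
  rfl

lemma ae_stieltjes_measure_pos (hY : IsYoungPair G g) : ∀ᵐ σ ∂hY.stieltjes.measure, 0 < σ := by
  rw [ae_iff]
  simp only [not_lt]
  exact (hY.stieltjes_measure_Iic 0).trans (by simp [hY.g_zero])

lemma ofReal_eq_lintegral_density (hY : IsYoungPair G g) {a : ℝ} (ha : 0 ≤ a) :
    ENNReal.ofReal (G a) = ∫⁻ τ in Ioc 0 a, ENNReal.ofReal (g τ) := by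
  rw [hY.G_eq a ha, intervalIntegral.integral_of_le ha]
  refine ofReal_integral_eq_lintegral_ofReal (hY.intervalIntegrable le_rfl ha).1 ?_
  filter_upwards [ae_restrict_mem measurableSet_Ioc] with τ hτ using hY.g_nonneg hτ.1.le

lemma ofReal_eq_lintegral_stieltjes (hY : IsYoungPair G g) {a : ℝ} (ha : 0 ≤ a) :
    ENNReal.ofReal (G a) = ∫⁻ σ, ENNReal.ofReal (a - σ) ∂hY.stieltjes.measure := by
  have hmeas : MeasurableSet {p : ℝ × ℝ | p.2 ≤ p.1} :=
    measurableSet_le measurable_snd measurable_fst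
  calc
    ENNReal.ofReal (G a) = ∫⁻ τ in Ioc 0 a, hY.stieltjes.measure (Iic τ) := by
      rw [hY.ofReal_eq_lintegral_density ha]
      refine setLIntegral_congr_fun measurableSet_Ioc fun τ hτ => ?_
      simp only [hY.stieltjes_measure_Iic, max_eq_left hτ.1.le]
    _ = ∫⁻ σ, volume.restrict (Ioc 0 a) (Ici σ) ∂hY.stieltjes.measure :=
      (Measure.prod_apply hmeas).symm.trans (Measure.prod_apply_symm hmeas)
    _ = ∫⁻ σ, ENNReal.ofReal (a - σ) ∂hY.stieltjes.measure := by
      refine lintegral_congr_ae ?_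
      filter_upwards [hY.ae_stieltjes_measure_pos] with σ hσ
      have : Ici σ ∩ Ioc 0 a = Icc σ a := by
        ext τ
        exact ⟨fun h => ⟨h.1, h.2.2⟩, fun h => ⟨h.1, hσ.trans_le h.1, h.2⟩⟩
      rw [Measure.restrict_apply measurableSet_Ici, this, Real.volume_Icc]

end IsYoungPair

open Module (finrank finrank_pos)

section NearMeasure

variable {X : Type*} [PseudoMetricSpace X] [MeasurableSpace X] {μ : Measure X}
  {E F : Set X} {ρ : ℝ}

/-- The measure of the set of pairs `(x, y) ∈ E × Fᶜ` at distance less than `ρ`: for `E = F` it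
measures how much of `E` lies close to its complement. -/
noncomputable def nearMeasure (μ : Measure X) (E F : Set X) (ρ : ℝ) : ℝ≥0∞ :=
  (μ.prod μ) {p | p.1 ∈ E ∧ p.2 ∉ F ∧ dist p.1 p.2 < ρ}

lemma nearMeasure_mono_radius {ρ' : ℝ} (h : ρ ≤ ρ') :
    nearMeasure μ E F ρ ≤ nearMeasure μ E F ρ' :=
  measure_mono fun _ hp => ⟨hp.1, hp.2.1, hp.2.2.trans_le h⟩

lemma nearMeasure_ball_ball_le (x : X) (r R : ℝ) :
    nearMeasure μ (ball x r) (ball x R) ρ ≤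
      nearMeasure μ (ball x r \ ball x (R - ρ)) (ball x R) ρ := by
  refine measure_mono fun p hp => ⟨⟨hp.1, fun hp1 => hp.2.1 ?_⟩, hp.2⟩
  rw [mem_ball] at hp1 ⊢
  linarith [dist_triangle_left p.2 x p.1, hp.2.2]

variable [OpensMeasurableSpace X] [SecondCountableTopology X]

lemma measurableSet_near (hE : MeasurableSet E) (hF : MeasurableSet F) (ρ : ℝ) :
    MeasurableSet {p : X × X | p.1 ∈ E ∧ p.2 ∉ F ∧ dist p.1 p.2 < ρ} :=
  (measurable_fst hE).inter <| (measurable_snd hF.compl).inter <|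
    measurableSet_lt (measurable_fst.dist measurable_snd) measurable_const

lemma nearMeasure_eq_setLIntegral [SFinite μ] (hE : MeasurableSet E) (hF : MeasurableSet F) :
    nearMeasure μ E F ρ = ∫⁻ x in E, μ (ball x ρ \ F) ∂μ := by
  rw [nearMeasure, Measure.prod_apply (measurableSet_near hE hF ρ), ← lintegral_indicator hE]
  refine lintegral_congr fun x => ?_
  by_cases hx : x ∈ E
  · rw [indicator_of_mem hx]
    congr 1
    ext y
    simp [hx, dist_comm x, and_comm]
  · simp [hx]

end NearMeasure

lemma measure_translate_nsmul_le {V : Type*} [AddCommGroup V] [MeasurableSpace V] [MeasurableAdd V]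
    (μ : Measure V) [μ.IsAddLeftInvariant] (E : Set V) (h : V) (k : ℕ) :
    μ {x | x ∈ E ∧ x + k • h ∉ E} ≤ k * μ {x | x ∈ E ∧ x + h ∉ E} := by
  induction k with
  | zero => simp
  | succ k ih =>
    have hsub : {x | x ∈ E ∧ x + (k + 1) • h ∉ E} ⊆
        {x | x ∈ E ∧ x + k • h ∉ E} ∪ (· + k • h) ⁻¹' {x | x ∈ E ∧ x + h ∉ E} := by
      rintro x ⟨hx, hx'⟩
      rw [succ_nsmul, ← add_assoc] at hx'
      by_cases hk : x + k • h ∈ E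
      · exact Or.inr ⟨hk, hx'⟩
      · exact Or.inl ⟨hx, hk⟩
    calc μ {x | x ∈ E ∧ x + (k + 1) • h ∉ E}
        ≤ μ {x | x ∈ E ∧ x + k • h ∉ E} + μ {x | x ∈ E ∧ x + h ∉ E} := by
          refine (measure_mono hsub).trans ((measure_union_le _ _).trans ?_)
          rw [measure_preimage_add_right]
      _ ≤ (k + 1 : ℕ) * μ {x | x ∈ E ∧ x + h ∉ E} := by
          rw [Nat.cast_succ, add_mul, one_mul]
          gcongr

section Haar

variable {V : Type*} [NormedAddCommGroup V] [NormedSpace ℝ V] [FiniteDimensional ℝ V]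
  [MeasurableSpace V] [BorelSpace V] {μ : Measure V} [μ.IsAddHaarMeasure]

lemma setLIntegral_ball_mul (μ : Measure V) [μ.IsAddHaarMeasure] {f : V → ℝ≥0∞}
    (hf : Measurable f) {c : ℝ} (hc : 0 < c) (ρ : ℝ) :
    ∫⁻ h in ball 0 (c * ρ), f h ∂μ =
      ENNReal.ofReal (c ^ finrank ℝ V) * ∫⁻ h in ball 0 ρ, f (c • h) ∂μ := by
  have hpre : (fun h : V => c • h) ⁻¹' ball 0 (c * ρ) = ball 0 ρ := by
    ext h
    simp [norm_smul, abs_of_pos hc, hc]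
  have hmap := setLIntegral_map (μ := μ) (measurableSet_ball (x := (0 : V)) (ε := c * ρ)) hf
    (measurable_const_smul c)
  rw [hpre] at hmap
  rw [← hmap]
  change _ = _ * ∫⁻ h in ball 0 (c * ρ), f h ∂(μ.map (c • ·))
  rw [Measure.map_addHaar_smul μ hc.ne', Measure.restrict_smul, lintegral_smul_measure,
    smul_eq_mul, ← mul_assoc, ← ENNReal.ofReal_mul (by positivity), abs_of_pos (by positivity),
    mul_inv_cancel₀ (by positivity), ENNReal.ofReal_one, one_mul]

variable {E F : Set V} {ρ : ℝ}

lemma nearMeasure_le (hE : MeasurableSet E) (hF : MeasurableSet F) :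
    nearMeasure μ E F ρ ≤ μ E * μ (ball 0 ρ) := by
  rw [nearMeasure_eq_setLIntegral hE hF, mul_comm, ← setLIntegral_const]
  refine lintegral_mono fun x => ?_
  rw [← Measure.addHaar_ball_center μ x ρ]
  exact measure_mono sdiff_subset

lemma le_nearMeasure (hE : MeasurableSet E) (hF : MeasurableSet F) :
    μ E * (μ (ball 0 ρ) - μ F) ≤ nearMeasure μ E F ρ := by
  rw [nearMeasure_eq_setLIntegral hE hF, mul_comm, ← setLIntegral_const]
  refine lintegral_mono fun x => ?_
  rw [← Measure.addHaar_ball_center μ x ρ]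
  exact le_measure_sdiff

lemma nearMeasure_eq_setLIntegral_translate (hE : MeasurableSet E) (hF : MeasurableSet F) :
    nearMeasure μ E F ρ = ∫⁻ h in ball 0 ρ, μ {x | x ∈ E ∧ x + h ∉ F} ∂μ := by
  have hmeas : MeasurableSet {p : V × V | p.1 ∈ E ∧ p.1 + p.2 ∉ F ∧ ‖p.2‖ < ρ} :=
    (measurable_fst hE).inter <| ((measurable_fst.add measurable_snd) hF.compl).inter <|
      measurableSet_lt measurable_snd.norm measurable_const
  have hshear := (measurePreserving_prod_add μ μ).measure_preimage
    (measurableSet_near hE hF ρ).nullMeasurableSet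
  simp only [preimage_ofPred_eq, dist_self_add_right] at hshear
  rw [nearMeasure, ← hshear, Measure.prod_apply_symm hmeas,
    ← lintegral_indicator measurableSet_ball]
  refine lintegral_congr fun h => ?_
  by_cases hh : ‖h‖ < ρ <;> simp [indicator, hh]

lemma nearMeasure_self_natCast_mul_le (hE : MeasurableSet E) {k : ℕ} (hk : 0 < k) :
    nearMeasure μ E E (k * ρ) ≤ (k : ℝ≥0∞) ^ (finrank ℝ V + 1) * nearMeasure μ E E ρ := by
  have hmeas : Measurable fun h => μ {x | x ∈ E ∧ x + h ∉ E} :=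
    measurable_measure_prodMk_left
      ((measurable_snd hE).inter ((measurable_snd.add measurable_fst) hE.compl))
  simp only [nearMeasure_eq_setLIntegral_translate hE hE]
  rw [setLIntegral_ball_mul μ hmeas (Nat.cast_pos.2 hk), ENNReal.ofReal_pow k.cast_nonneg,
    ENNReal.ofReal_natCast, pow_succ, mul_assoc, ← lintegral_const_mul _ hmeas]
  gcongr with h
  simpa only [Nat.cast_smul_eq_nsmul] using measure_translate_nsmul_le μ E h k

lemma nearMeasure_self_le_add (hE : MeasurableSet E) (hF : MeasurableSet F) :
    nearMeasure μ E E ρ ≤ nearMeasure μ E F ρ + μ (ball 0 ρ) * μ (F \ E) := by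
  rw [nearMeasure_eq_setLIntegral_translate hE hE, nearMeasure_eq_setLIntegral_translate hE hF,
    mul_comm, ← setLIntegral_const, ← lintegral_add_right _ measurable_const]
  refine lintegral_mono fun h => ?_
  have hsub : {x | x ∈ E ∧ x + h ∉ E} ⊆ {x | x ∈ E ∧ x + h ∉ F} ∪ (· + h) ⁻¹' (F \ E) := by
    rintro x ⟨hx, hx'⟩
    by_cases hF : x + h ∈ F
    · exact Or.inr ⟨hF, hx'⟩
    · exact Or.inl ⟨hx, hF⟩
  refine (measure_mono hsub).trans ((measure_union_le _ _).trans ?_)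
  rw [measure_preimage_add_right]

variable [Nontrivial V]

lemma measure_ball_add_measure_ball_le (μ : Measure V) [μ.IsAddHaarMeasure] {a b : ℝ}
    (ha : 0 ≤ a) (hb : 0 ≤ b) :
    μ (ball 0 a) + μ (ball 0 b) ≤ μ (ball 0 (a + b)) := by
  rw [Measure.addHaar_ball μ 0 ha, Measure.addHaar_ball μ 0 hb,
    Measure.addHaar_ball μ 0 (add_nonneg ha hb), ← add_mul,
    ← ENNReal.ofReal_add (by positivity) (by positivity)]
  gcongr
  exact pow_add_pow_le ha hb finrank_pos.ne'

lemma measure_ball_diff_ball_le (μ : Measure V) [μ.IsAddHaarMeasure] {a b : ℝ}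
    (ha : 0 ≤ a) (hab : a ≤ b) :
    μ (ball 0 b \ ball 0 a) ≤
      ENNReal.ofReal ((b - a) * finrank ℝ V * b ^ (finrank ℝ V - 1)) * μ (ball 0 1) := by
  have hb : 0 ≤ b := ha.trans hab
  rw [measure_sdiff (ball_subset_ball hab) measurableSet_ball.nullMeasurableSet
      measure_ball_lt_top.ne, Measure.addHaar_ball μ 0 ha, Measure.addHaar_ball μ 0 hb,
    ← ENNReal.sub_mul fun _ _ => measure_ball_lt_top.ne, ← ENNReal.ofReal_sub _ (by positivity)]
  gcongr
  calc b ^ finrank ℝ V - a ^ finrank ℝ V ≤ |b ^ finrank ℝ V - a ^ finrank ℝ V| := le_abs_self _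
    _ ≤ |b - a| * finrank ℝ V * max |b| |a| ^ (finrank ℝ V - 1) := abs_pow_sub_pow_le b a _
    _ = (b - a) * finrank ℝ V * b ^ (finrank ℝ V - 1) := by
      rw [abs_of_nonneg (sub_nonneg.2 hab), abs_of_nonneg ha, abs_of_nonneg hb, max_eq_left hab]

lemma le_of_measure_ball_le_measure_ball {r R : ℝ} (hr : 0 < r)
    (h : μ (ball 0 r) ≤ μ (ball 0 R)) : r ≤ R := by
  by_contra! hlt
  have hlt' : max R 0 < r := max_lt hlt hr
  have hadd := measure_ball_add_measure_ball_le μ (le_max_right R 0) (sub_nonneg.2 hlt'.le)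
  rw [add_sub_cancel] at hadd
  have hle : μ (ball 0 (max R 0)) + μ (ball 0 (r - max R 0)) ≤ μ (ball 0 (max R 0)) :=
    hadd.trans (h.trans (measure_mono (ball_subset_ball (le_max_left R 0))))
  exact hle.not_gt (ENNReal.lt_add_right measure_ball_lt_top.ne
    (measure_ball_pos μ 0 (sub_pos.2 hlt')).ne')

lemma le_nearMeasure_self_of_measure_eq_ball (hE : MeasurableSet E) {r : ℝ} (hr : 0 < r)
    (hEr : μ E = μ (ball 0 r)) (hρ : 0 < ρ) (hρr : ρ ≤ r) :
    ENNReal.ofReal ((ρ / (3 * r)) ^ (finrank ℝ V + 1)) * μ (ball 0 r) ^ 2 ≤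
      nearMeasure μ E E ρ := by
  obtain ⟨k, hk2, hk3⟩ : ∃ k : ℕ, 2 * r ≤ k * ρ ∧ k * ρ ≤ 3 * r := by
    refine ⟨⌈2 * r / ρ⌉₊, (div_le_iff₀ hρ).1 (Nat.le_ceil _), ?_⟩
    have := (Nat.ceil_lt_add_one (div_nonneg (by linarith : 0 ≤ 2 * r) hρ.le)).le
    calc ⌈2 * r / ρ⌉₊ * ρ ≤ (2 * r / ρ + 1) * ρ := by gcongr
      _ = 2 * r + ρ := by field_simp
      _ ≤ 3 * r := by linarith
  have hk : 0 < k := Nat.pos_of_ne_zero fun h => by subst h; norm_num at hk2; linarith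
  have hgap : μ (ball 0 r) ≤ μ (ball 0 (k * ρ)) - μ E := by
    refine ENNReal.le_sub_of_add_le_left (hEr ▸ measure_ball_lt_top.ne) ?_
    rw [hEr]
    refine (measure_ball_add_measure_ball_le μ hr.le hr.le).trans (measure_mono ?_)
    exact ball_subset_ball (by linarith)
  have hfar : μ (ball 0 r) ^ 2 ≤ (k : ℝ≥0∞) ^ (finrank ℝ V + 1) * nearMeasure μ E E ρ :=
    calc μ (ball 0 r) ^ 2 ≤ μ E * (μ (ball 0 (k * ρ)) - μ E) := by
          rw [sq]
          exact mul_le_mul' hEr.ge hgap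
      _ ≤ nearMeasure μ E E (k * ρ) := le_nearMeasure hE hE
      _ ≤ _ := nearMeasure_self_natCast_mul_le hE hk
  calc ENNReal.ofReal ((ρ / (3 * r)) ^ (finrank ℝ V + 1)) * μ (ball 0 r) ^ 2
      ≤ ENNReal.ofReal ((ρ / (3 * r)) ^ (finrank ℝ V + 1)) *
          ((k : ℝ≥0∞) ^ (finrank ℝ V + 1) * nearMeasure μ E E ρ) := by gcongr
    _ = ENNReal.ofReal ((k * ρ / (3 * r)) ^ (finrank ℝ V + 1)) * nearMeasure μ E E ρ := by
      rw [← ENNReal.ofReal_natCast, ← ENNReal.ofReal_pow k.cast_nonneg, ← mul_assoc,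
        ← ENNReal.ofReal_mul (by positivity), ← mul_pow]
      congr 3
      ring
    _ ≤ nearMeasure μ E E ρ := by
      refine mul_le_of_le_one_left' (ENNReal.ofReal_le_one.2 (pow_le_one₀ (by positivity) ?_))
      exact (div_le_one₀ (by positivity)).2 hk3

lemma nearMeasure_ball_ball_le_add_radius (hE : MeasurableSet E) (hF : MeasurableSet F) {r R : ℝ}
    (hEr : μ E = μ (ball 0 r)) (hFR : μ F = μ (ball 0 R)) (hR : 0 ≤ R) (hρ : 0 ≤ ρ) :
    nearMeasure μ (ball 0 r) (ball 0 R) ρ ≤ nearMeasure μ E F (R + ρ) :=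
  calc nearMeasure μ (ball 0 r) (ball 0 R) ρ
      ≤ μ (ball 0 r) * μ (ball 0 ρ) := nearMeasure_le measurableSet_ball measurableSet_ball
    _ ≤ μ E * (μ (ball 0 (R + ρ)) - μ F) := by
      refine mul_le_mul' hEr.ge (ENNReal.le_sub_of_add_le_left ?_ ?_)
      · exact hFR ▸ measure_ball_lt_top.ne
      · exact hFR ▸ measure_ball_add_measure_ball_le μ hR hρ
    _ ≤ nearMeasure μ E F (R + ρ) := le_nearMeasure hE hF

/-- The dilation of radii `l` at which the set of pairs in `E × Eᶜ` at distance less than `l * ρ`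
outweighs the boundary shells of width `ρ`; it solves `l / 3 ^ (n + 1) = n * 2 ^ n`. -/
def dilationFactor (n : ℕ) : ℝ := n * 2 ^ n * 3 ^ (n + 1)

lemma one_le_dilationFactor {n : ℕ} (hn : n ≠ 0) : 1 ≤ dilationFactor n := by
  have hn' : (1 : ℝ) ≤ n := Nat.one_le_cast.2 (Nat.one_le_iff_ne_zero.2 hn)
  exact one_le_mul_of_one_le_of_one_le
    (one_le_mul_of_one_le_of_one_le hn' (one_le_pow₀ one_le_two)) (one_le_pow₀ (by norm_num))

lemma shell_add_shell_le {n : ℕ} (hn : n ≠ 0) {r R ρ : ℝ} (hr : 0 < r) (hρ : 0 < ρ)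
    (hR : 0 ≤ R) (hRr : R ≤ 2 * r) :
    ρ * n * r ^ (n - 1) * ρ ^ n + (dilationFactor n * ρ) ^ n * (ρ * n * R ^ (n - 1)) ≤
      (dilationFactor n * ρ / (3 * r)) ^ (n + 1) * (r ^ n) ^ 2 := by
  obtain ⟨m, rfl⟩ := Nat.exists_eq_succ_of_ne_zero hn
  simp only [Nat.succ_eq_add_one, Nat.add_sub_cancel]
  set l := dilationFactor (m + 1) with hl
  have hl1 : 1 ≤ l := one_le_dilationFactor hn
  have hone : 1 ≤ 2 ^ m * l ^ (m + 1) :=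
    one_le_mul_of_one_le_of_one_le (one_le_pow₀ one_le_two) (one_le_pow₀ hl1)
  calc ρ * (m + 1 : ℕ) * r ^ m * ρ ^ (m + 1) + (l * ρ) ^ (m + 1) * (ρ * (m + 1 : ℕ) * R ^ m)
      ≤ ρ * (m + 1 : ℕ) * r ^ m * ρ ^ (m + 1) +
          (l * ρ) ^ (m + 1) * (ρ * (m + 1 : ℕ) * (2 * r) ^ m) := by gcongr
    _ = ρ ^ (m + 2) * r ^ m * (m + 1 : ℕ) * (1 + 2 ^ m * l ^ (m + 1)) := by ring
    _ ≤ ρ ^ (m + 2) * r ^ m * (m + 1 : ℕ) * (2 ^ m * l ^ (m + 1) + 2 ^ m * l ^ (m + 1)) := by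
      gcongr
    _ = ρ ^ (m + 2) * r ^ m * l ^ (m + 1) * (l / 3 ^ (m + 1 + 1)) := by
      have hratio : l / 3 ^ (m + 1 + 1) = (m + 1 : ℕ) * 2 ^ (m + 1) := by
        rw [hl, dilationFactor]
        field_simp
      rw [hratio]
      ring
    _ = (l * ρ / (3 * r)) ^ (m + 1 + 1) * (r ^ (m + 1)) ^ 2 := by
      rw [div_pow, mul_pow, mul_pow]
      field_simp
      ring

lemma nearMeasure_ball_ball_le_shell {r R : ℝ} (hρ : 0 ≤ ρ) (hρr : ρ ≤ R) (hrR : r ≤ R)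
    (hRr : R ≤ r + ρ) :
    nearMeasure μ (ball 0 r) (ball 0 R) ρ ≤
      ENNReal.ofReal (ρ * finrank ℝ V * r ^ (finrank ℝ V - 1) * ρ ^ finrank ℝ V) *
        μ (ball 0 1) ^ 2 := by
  have hr : 0 ≤ r := by linarith
  calc nearMeasure μ (ball 0 r) (ball 0 R) ρ
      ≤ nearMeasure μ (ball 0 r \ ball 0 (R - ρ)) (ball 0 R) ρ := nearMeasure_ball_ball_le ..
    _ ≤ μ (ball 0 r \ ball 0 (R - ρ)) * μ (ball 0 ρ) :=
      nearMeasure_le (measurableSet_ball.diff measurableSet_ball) measurableSet_ball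
    _ ≤ ENNReal.ofReal (ρ * finrank ℝ V * r ^ (finrank ℝ V - 1)) * μ (ball 0 1) *
          (ENNReal.ofReal (ρ ^ finrank ℝ V) * μ (ball 0 1)) := by
      rw [← Measure.addHaar_ball μ 0 hρ]
      gcongr
      refine (measure_ball_diff_ball_le μ (by linarith) (by linarith)).trans ?_
      gcongr
      linarith
    _ = _ := by
      rw [mul_mul_mul_comm, ← ENNReal.ofReal_mul (by positivity), sq]

lemma measure_diff_le_of_measure_eq_ball (hE : MeasurableSet E) (hEF : E ⊆ F) {r R : ℝ}
    (hEr : μ E = μ (ball 0 r)) (hFR : μ F = μ (ball 0 R)) (hr : 0 ≤ r) (hrR : r ≤ R)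
    (hRr : R ≤ r + ρ) :
    μ (F \ E) ≤
      ENNReal.ofReal (ρ * finrank ℝ V * R ^ (finrank ℝ V - 1)) * μ (ball 0 1) := by
  have hR : 0 ≤ R := hr.trans hrR
  have hball : μ (F \ E) = μ (ball 0 R \ ball 0 r) := by
    rw [measure_sdiff hEF hE.nullMeasurableSet (hEr ▸ measure_ball_lt_top.ne), hEr, hFR,
      measure_sdiff (ball_subset_ball hrR) measurableSet_ball.nullMeasurableSet
        measure_ball_lt_top.ne]
  rw [hball]
  refine (measure_ball_diff_ball_le μ hr hrR).trans ?_
  gcongr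
  linarith

lemma nearMeasure_ball_ball_le_dilationFactor_mul (hE : MeasurableSet E) (hF : MeasurableSet F)
    (hEF : E ⊆ F) {r R : ℝ} (hEr : μ E = μ (ball 0 r)) (hFR : μ F = μ (ball 0 R)) (hρ : 0 < ρ)
    (hr : dilationFactor (finrank ℝ V) * ρ ≤ r) (hrR : r ≤ R) (hRr : R ≤ r + ρ) :
    nearMeasure μ (ball 0 r) (ball 0 R) ρ ≤
      nearMeasure μ E F (dilationFactor (finrank ℝ V) * ρ) := by
  set n := finrank ℝ V
  set l := dilationFactor n
  have hρl : ρ ≤ l * ρ := le_mul_of_one_le_left hρ.le (one_le_dilationFactor finrank_pos.ne')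
  have hlρ : 0 < l * ρ := hρ.trans_le hρl
  have hr0 : 0 < r := hlρ.trans_le hr
  have hR0 : 0 < R := hr0.trans_le hrR
  have hgap : μ (ball 0 (l * ρ)) * μ (F \ E) ≤
      ENNReal.ofReal ((l * ρ) ^ n * (ρ * n * R ^ (n - 1))) * μ (ball 0 1) ^ 2 := by
    rw [Measure.addHaar_ball μ 0 hlρ.le, ENNReal.ofReal_mul (by positivity), sq, mul_mul_mul_comm]
    gcongr
    exact measure_diff_le_of_measure_eq_ball hE hEF hEr hFR hr0.le hrR hRr
  have hsum : nearMeasure μ (ball 0 r) (ball 0 R) ρ + μ (ball 0 (l * ρ)) * μ (F \ E) ≤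
      nearMeasure μ E F (l * ρ) + μ (ball 0 (l * ρ)) * μ (F \ E) :=
    calc nearMeasure μ (ball 0 r) (ball 0 R) ρ + μ (ball 0 (l * ρ)) * μ (F \ E)
        ≤ ENNReal.ofReal (ρ * n * r ^ (n - 1) * ρ ^ n) * μ (ball 0 1) ^ 2 +
            ENNReal.ofReal ((l * ρ) ^ n * (ρ * n * R ^ (n - 1))) * μ (ball 0 1) ^ 2 :=
          add_le_add (nearMeasure_ball_ball_le_shell hρ.le (by linarith) hrR hRr) hgap
      _ ≤ ENNReal.ofReal ((l * ρ / (3 * r)) ^ (n + 1) * (r ^ n) ^ 2) * μ (ball 0 1) ^ 2 := by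
        rw [← add_mul, ← ENNReal.ofReal_add (by positivity) (by positivity)]
        gcongr
        exact shell_add_shell_le finrank_pos.ne' hr0 hρ hR0.le (by linarith)
      _ = ENNReal.ofReal ((l * ρ / (3 * r)) ^ (n + 1)) * μ (ball 0 r) ^ 2 := by
        rw [Measure.addHaar_ball μ 0 hr0.le, mul_pow, ← ENNReal.ofReal_pow (by positivity),
          ← mul_assoc, ← ENNReal.ofReal_mul (by positivity)]
      _ ≤ nearMeasure μ E E (l * ρ) := le_nearMeasure_self_of_measure_eq_ball hE hr0 hEr hlρ hr
      _ ≤ _ := nearMeasure_self_le_add hE hF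
  refine (ENNReal.add_le_add_iff_right (ENNReal.mul_ne_top measure_ball_lt_top.ne ?_)).1 hsum
  exact measure_ne_top_of_subset sdiff_subset (hFR ▸ measure_ball_lt_top.ne)

theorem nearMeasure_ball_ball_le_of_measure_eq (hE : MeasurableSet E) (hF : MeasurableSet F)
    (hEF : E ⊆ F) {r R : ℝ} (hEr : μ E = μ (ball 0 r)) (hFR : μ F = μ (ball 0 R))
    (hρ : 0 < ρ) :
    nearMeasure μ (ball 0 r) (ball 0 R) ρ ≤
      nearMeasure μ E F ((dilationFactor (finrank ℝ V) + 2) * ρ) := by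
  rcases le_or_gt r 0 with hr0 | hr0
  · simp [nearMeasure, ball_eq_empty.2 hr0]
  have hrR : r ≤ R :=
    le_of_measure_ball_le_measure_ball hr0 (hEr.ge.trans ((measure_mono hEF).trans hFR.le))
  rcases lt_or_ge (r + ρ) R with hRr | hRr
  · have hempty : ball (0 : V) r \ ball 0 (R - ρ) = ∅ :=
      sdiff_eq_empty.2 (ball_subset_ball (by linarith))
    refine (nearMeasure_ball_ball_le 0 r R).trans ?_
    simp [hempty, nearMeasure]
  -- A set much larger than `ρ` is compared through its boundary at scale `l * ρ`; for the others
  -- the ball of radius `R + ρ` around each point already sticks out of `F` by enough.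
  rcases le_or_gt (dilationFactor (finrank ℝ V) * ρ) r with hr | hr
  · exact (nearMeasure_ball_ball_le_dilationFactor_mul hE hF hEF hEr hFR hρ hr hrR hRr).trans
      (nearMeasure_mono_radius (by linarith))
  · exact (nearMeasure_ball_ball_le_add_radius hE hF hEr hFR (hr0.le.trans hrR) hρ.le).trans
      (nearMeasure_mono_radius (by linarith))

end Haar

section NearModular

variable {X : Type*} [PseudoMetricSpace X] [MeasurableSpace X] {μ : Measure X}
  {u : X → ℝ} {ρ : ℝ}

/-- The modular `∬_{|x - y| < ρ} φ(|u x - u y|) dμ(x) dμ(y)` of the increments of `u` at scale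
`ρ`. -/
noncomputable def nearModular (μ : Measure X) (φ : ℝ → ℝ) (u : X → ℝ) (ρ : ℝ) : ℝ≥0∞ :=
  ∫⁻ p in {p : X × X | dist p.1 p.2 < ρ}, ENNReal.ofReal (φ |u p.1 - u p.2|) ∂(μ.prod μ)

lemma ofReal_abs_sub_sub {σ : ℝ} (hσ : 0 ≤ σ) (a b : ℝ) :
    ENNReal.ofReal (|a - b| - σ) = ENNReal.ofReal (a - b - σ) + ENNReal.ofReal (b - a - σ) := by
  rcases le_total a b with h | h
  · rw [abs_of_nonpos (sub_nonpos.2 h), ENNReal.ofReal_of_nonpos (by linarith : a - b - σ ≤ 0),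
      zero_add, neg_sub]
  · rw [abs_of_nonneg (sub_nonneg.2 h), ENNReal.ofReal_of_nonpos (by linarith : b - a - σ ≤ 0),
      add_zero]

lemma IsYoungPair.nearModular_div_eq_lintegral [SFinite μ] {G g : ℝ → ℝ} (hY : IsYoungPair G g)
    (hu : Measurable u) {c : ℝ} (hc : 0 < c) :
    nearModular μ (fun a => G (a / c)) u ρ =
      ENNReal.ofReal c⁻¹ * ∫⁻ σ, nearModular μ (· - c * σ) u ρ ∂hY.stieltjes.measure := by
  have hkernel : ∀ a, 0 ≤ a → ENNReal.ofReal (G (a / c)) =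
      ∫⁻ σ, ENNReal.ofReal c⁻¹ * ENNReal.ofReal (a - c * σ) ∂hY.stieltjes.measure := by
    intro a ha
    rw [hY.ofReal_eq_lintegral_stieltjes (div_nonneg ha hc.le)]
    refine lintegral_congr fun σ => ?_
    rw [← ENNReal.ofReal_mul (inv_nonneg.2 hc.le)]
    congr 1
    field_simp
  simp only [nearModular, hkernel _ (abs_nonneg _)]
  rw [lintegral_lintegral_swap (by fun_prop)]
  simp_rw [lintegral_const_mul' _ _ ENNReal.ofReal_ne_top]

variable [OpensMeasurableSpace X] [SecondCountableTopology X]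

lemma measurableSet_dist_lt (ρ : ℝ) : MeasurableSet {p : X × X | dist p.1 p.2 < ρ} :=
  measurableSet_lt measurable_dist measurable_const

lemma setLIntegral_ofReal_sub_sub [SFinite μ] (hu : Measurable u) (hu0 : ∀ x, 0 ≤ u x) (σ : ℝ) :
    ∫⁻ p in {p : X × X | dist p.1 p.2 < ρ}, ENNReal.ofReal (u p.1 - u p.2 - σ) ∂(μ.prod μ) =
      ∫⁻ t in Ici 0, nearMeasure μ {x | t + σ < u x} {x | t < u x} ρ := by
  have hmeas : MeasurableSet {q : (X × X) × ℝ | q.2 + σ < u q.1.1 ∧ u q.1.2 ≤ q.2} := by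
    have hfst : Measurable fun q : (X × X) × ℝ => u q.1.1 := by fun_prop
    have hsnd : Measurable fun q : (X × X) × ℝ => u q.1.2 := by fun_prop
    exact (measurableSet_lt (measurable_snd.add_const σ) hfst).inter
      (measurableSet_le hsnd measurable_snd)
  calc
    _ = ∫⁻ p in {p : X × X | dist p.1 p.2 < ρ},
          volume.restrict (Ici 0) {t : ℝ | t + σ < u p.1 ∧ u p.2 ≤ t} ∂(μ.prod μ) := by
      refine lintegral_congr fun p => ?_
      have hlevels : {t : ℝ | t + σ < u p.1 ∧ u p.2 ≤ t} = Ico (u p.2) (u p.1 - σ) := by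
        ext t
        simp only [mem_ofPred_eq, mem_Ico, lt_sub_iff_add_lt, and_comm]
      have hsub : Ico (u p.2) (u p.1 - σ) ⊆ Ici 0 := fun t ht => (hu0 p.2).trans ht.1
      rw [hlevels, Measure.restrict_eq_self _ hsub, Real.volume_Ico]
      congr 1
      ring
    _ = ∫⁻ t in Ici 0, (μ.prod μ).restrict {p : X × X | dist p.1 p.2 < ρ}
          {p | t + σ < u p.1 ∧ u p.2 ≤ t} :=
      (Measure.prod_apply hmeas).symm.trans (Measure.prod_apply_symm hmeas)
    _ = ∫⁻ t in Ici 0, nearMeasure μ {x | t + σ < u x} {x | t < u x} ρ := by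
      refine lintegral_congr fun t => ?_
      rw [Measure.restrict_apply' (measurableSet_dist_lt ρ), nearMeasure]
      congr 1
      ext p
      simp [and_assoc]

lemma nearModular_sub_const [SFinite μ] (hu : Measurable u) (hu0 : ∀ x, 0 ≤ u x) {σ : ℝ}
    (hσ : 0 ≤ σ) :
    nearModular μ (· - σ) u ρ =
      2 * ∫⁻ t in Ici 0, nearMeasure μ {x | t + σ < u x} {x | t < u x} ρ := by
  have hswap :
      ∫⁻ p in {p : X × X | dist p.1 p.2 < ρ}, ENNReal.ofReal (u p.2 - u p.1 - σ) ∂(μ.prod μ) =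
        ∫⁻ p in {p : X × X | dist p.1 p.2 < ρ}, ENNReal.ofReal (u p.1 - u p.2 - σ) ∂(μ.prod μ) := by
    rw [← Measure.measurePreserving_swap.setLIntegral_comp_preimage_emb
      MeasurableEquiv.prodComm.measurableEmbedding]
    simp only [preimage_ofPred_eq, Prod.fst_swap, Prod.snd_swap, dist_comm]
  simp only [nearModular, ofReal_abs_sub_sub hσ]
  rw [lintegral_add_left (by fun_prop), hswap, setLIntegral_ofReal_sub_sub hu hu0, two_mul]

end NearModular

lemma exists_gt_lt_measure_superlevel {α : Type*} [MeasurableSpace α] {μ : Measure α} {u : α → ℝ}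
    {t : ℝ} {c : ℝ≥0∞} (h : c < μ {x | t < u x}) : ∃ τ > t, c < μ {x | τ < u x} := by
  obtain ⟨τ, hτanti, hτt, hτlim⟩ := exists_seq_strictAnti_tendsto t
  have hunion : {x | t < u x} = ⋃ n, {x | τ n < u x} := by
    ext x
    simp only [mem_ofPred_eq, mem_iUnion]
    exact ⟨fun hx => ((tendsto_order.1 hτlim).2 _ hx).exists, fun ⟨n, hn⟩ => (hτt n).trans hn⟩
  have hmono : Monotone fun n => {x | τ n < u x} :=
    fun m n hmn x hx => (hτanti.antitone hmn).trans_lt hx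
  rw [hunion, hmono.measure_iUnion, lt_iSup_iff] at h
  obtain ⟨n, hn⟩ := h
  exact ⟨τ n, hτt n, hn⟩

section Rearrangement

variable {N : ℕ} {u : EuclideanSpace ℝ (Fin N) → ℝ} {A : Set (EuclideanSpace ℝ (Fin N))}

lemma rearrangeFun_nonneg (x : EuclideanSpace ℝ (Fin N)) : 0 ≤ rearrangeFun u x :=
  Real.sSup_nonneg fun _ ht => ht.1.le

lemma lt_rearrangeFun_iff (hu : BddAbove (range u)) {t : ℝ} (ht : 0 ≤ t)
    {x : EuclideanSpace ℝ (Fin N)} :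
    t < rearrangeFun u x ↔ ballVol N * ENNReal.ofReal (‖x‖ ^ N) < volume {y | t < u y} := by
  constructor
  · intro h
    by_contra! hle
    refine h.not_ge (Real.sSup_le (fun τ hτ => ?_) ht)
    by_contra! htτ
    exact hle.not_gt (hτ.2.trans_le (measure_mono fun y hy => htτ.trans hy))
  · intro h
    obtain ⟨τ, hτ, hlt⟩ := exists_gt_lt_measure_superlevel h
    refine hτ.trans_le (le_csSup ?_ ⟨ht.trans_lt hτ, hlt⟩)
    obtain ⟨B, hB⟩ := hu
    refine ⟨B, fun σ hσ => ?_⟩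
    obtain ⟨y, hy⟩ := nonempty_of_measure_ne_zero (pos_of_gt hσ.2).ne'
    exact (hy.trans_le (hB (mem_range_self y))).le

lemma ballVol_ne_zero (N : ℕ) : ballVol N ≠ 0 := (measure_ball_pos _ _ one_pos).ne'

lemma ballVol_ne_top (N : ℕ) : ballVol N ≠ ⊤ := measure_ball_lt_top.ne

variable [NeZero N]

lemma volume_ball_zero_eq {r : ℝ} (hr : 0 ≤ r) :
    volume (ball (0 : EuclideanSpace ℝ (Fin N)) r) = ballVol N * ENNReal.ofReal (r ^ N) := by
  rw [Measure.addHaar_ball volume 0 hr, finrank_euclideanSpace_fin, mul_comm, ballVol]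

lemma volume_rearrangeSet (hA : volume A ≠ ⊤) : volume (rearrangeSet A) = volume A := by
  have hpos : 0 < (ballVol N).toReal := ENNReal.toReal_pos (ballVol_ne_zero N) (ballVol_ne_top N)
  rw [rearrangeSet, volume_ball_zero_eq (by positivity),
    Real.rpow_inv_natCast_pow (by positivity) (NeZero.ne N), ENNReal.ofReal_div_of_pos hpos,
    ENNReal.ofReal_toReal hA, ENNReal.ofReal_toReal (ballVol_ne_top N),
    ENNReal.mul_div_cancel (ballVol_ne_zero N) (ballVol_ne_top N)]

lemma mem_rearrangeSet_iff (hA : volume A ≠ ⊤) {x : EuclideanSpace ℝ (Fin N)} :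
    x ∈ rearrangeSet A ↔ ballVol N * ENNReal.ofReal (‖x‖ ^ N) < volume A := by
  have hr : 0 ≤ ((volume A).toReal / (ballVol N).toReal) ^ (N : ℝ)⁻¹ := by positivity
  rw [← volume_rearrangeSet hA, rearrangeSet, volume_ball_zero_eq hr,
    ENNReal.mul_lt_mul_iff_right (ballVol_ne_zero N) (ballVol_ne_top N),
    ENNReal.ofReal_lt_ofReal_iff_of_nonneg (by positivity),
    pow_lt_pow_iff_left₀ (norm_nonneg x) hr (NeZero.ne N), mem_ball_zero_iff]

lemma setOf_lt_rearrangeFun (hu : BddAbove (range u)) (hfin : volume {x | 0 < u x} ≠ ⊤) {t : ℝ}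
    (ht : 0 ≤ t) : {x | t < rearrangeFun u x} = rearrangeSet {x | t < u x} := by
  ext x
  rw [mem_ofPred_eq, lt_rearrangeFun_iff hu ht, mem_rearrangeSet_iff]
  exact measure_ne_top_of_subset (fun x hx => ht.trans_lt hx) hfin

lemma measurable_rearrangeFun (hu : BddAbove (range u)) (hfin : volume {x | 0 < u x} ≠ ⊤) :
    Measurable (rearrangeFun u) := by
  refine measurable_of_Ioi fun t => ?_
  change MeasurableSet {x | t < rearrangeFun u x}
  rcases le_or_gt 0 t with ht | ht
  · rw [setOf_lt_rearrangeFun hu hfin ht]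
    exact measurableSet_ball
  · simp only [ht.trans_le (rearrangeFun_nonneg _), ofPred_true, MeasurableSet.univ]

lemma nearMeasure_rearrangeSet_le {E F : Set (EuclideanSpace ℝ (Fin N))} (hE : MeasurableSet E)
    (hF : MeasurableSet F) (hEF : E ⊆ F) (hfin : volume F ≠ ⊤) {ρ : ℝ} (hρ : 0 < ρ) :
    nearMeasure volume (rearrangeSet E) (rearrangeSet F) ρ ≤
      nearMeasure volume E F ((dilationFactor N + 2) * ρ) := by
  have h := nearMeasure_ball_ball_le_of_measure_eq hE hF hEF
    (volume_rearrangeSet (measure_ne_top_of_subset hEF hfin)).symm (volume_rearrangeSet hfin).symm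
    hρ
  rwa [finrank_euclideanSpace_fin] at h

lemma nearModular_sub_const_rearrangeFun_le (hu : Measurable u) (hu0 : ∀ x, 0 ≤ u x)
    (hbdd : BddAbove (range u)) (hfin : volume {x | 0 < u x} ≠ ⊤) {ρ σ : ℝ} (hρ : 0 < ρ)
    (hσ : 0 ≤ σ) :
    nearModular volume (· - σ) (rearrangeFun u) ρ ≤
      nearModular volume (· - σ) u ((dilationFactor N + 2) * ρ) := by
  rw [nearModular_sub_const (measurable_rearrangeFun hbdd hfin) rearrangeFun_nonneg hσ,
    nearModular_sub_const hu hu0 hσ]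
  refine mul_le_mul_right (setLIntegral_mono' measurableSet_Ici fun t (ht : 0 ≤ t) => ?_) _
  rw [setOf_lt_rearrangeFun hbdd hfin (add_nonneg ht hσ), setOf_lt_rearrangeFun hbdd hfin ht]
  refine nearMeasure_rearrangeSet_le (measurableSet_lt measurable_const hu)
    (measurableSet_lt measurable_const hu) (fun x (hx : t + σ < u x) => ?_) ?_ hρ
  · exact (le_add_of_nonneg_right hσ).trans_lt hx
  · exact measure_ne_top_of_subset (fun x (hx : t < u x) => ht.trans_lt hx) hfin

lemma IsYoungPair.nearModular_div_rearrangeFun_le {G g : ℝ → ℝ} (hY : IsYoungPair G g)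
    (hu : Measurable u) (hu0 : ∀ x, 0 ≤ u x) (hbdd : BddAbove (range u))
    (hfin : volume {x | 0 < u x} ≠ ⊤) {ρ c : ℝ} (hρ : 0 < ρ) (hc : 0 < c) :
    nearModular volume (fun a => G (a / c)) (rearrangeFun u) ρ ≤
      nearModular volume (fun a => G (a / c)) u ((dilationFactor N + 2) * ρ) := by
  rw [hY.nearModular_div_eq_lintegral (measurable_rearrangeFun hbdd hfin) hc,
    hY.nearModular_div_eq_lintegral hu hc]
  gcongr 1
  refine lintegral_mono_ae ?_
  filter_upwards [hY.ae_stieltjes_measure_pos] with σ hσ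
  exact nearModular_sub_const_rearrangeFun_le hu hu0 hbdd hfin hρ (mul_pos hc hσ).le

end Rearrangement

/-- The kernel `G(a / r^s) / r^d` of the fractional seminorm, for an increment `a` at distance
`r`. -/
noncomputable def fracKernel (G : ℝ → ℝ) (s d a r : ℝ) : ℝ :=
  G (a / r ^ s) / r ^ d

section FracKernel

variable {G g : ℝ → ℝ} {pm pp s d a r l ρ : ℝ}

lemma IsYoungPair.fracKernel_nonneg (hY : IsYoungPair G g) (ha : 0 ≤ a) (hr : 0 ≤ r) :
    0 ≤ fracKernel G s d a r :=
  div_nonneg (hY.nonneg (by positivity)) (by positivity)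

lemma IsYoungPair.fracKernel_zero (hY : IsYoungPair G g) : fracKernel G s d 0 r = 0 := by
  rw [fracKernel, zero_div, hY.map_zero, zero_div]

lemma fracKernel_add_one (hr : 0 < r) : fracKernel G s (d + 1) a r = fracKernel G s d a r / r := by
  rw [fracKernel, fracKernel, Real.rpow_add_one hr.ne', div_div]

lemma IsYoungPair.aemeasurable_fracKernel (hY : IsYoungPair G g) {α : Type*} [MeasurableSpace α]
    {μ : Measure α} {f h : α → ℝ} (hf : AEMeasurable f μ) (hh : AEMeasurable h μ)
    (hf0 : ∀ᵐ x ∂μ, 0 ≤ f x) (hh0 : ∀ᵐ x ∂μ, 0 ≤ h x) (s d : ℝ) :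
    AEMeasurable (fun x => ENNReal.ofReal (fracKernel G s d (f x) (h x))) μ := by
  refine .ennreal_ofReal (.div (hY.aemeasurable_comp (by fun_prop) ?_) (by fun_prop))
  filter_upwards [hf0, hh0] with x hx hx'
  positivity

lemma IsYoungPair.fracKernel_le_rpow_mul_fracKernel (hY : IsYoungPair G g)
    (hG : GrowthCond G g pm pp) (hs : 0 ≤ s) (ha : 0 ≤ a) (hr : 0 < r) (hrρ : r ≤ ρ) :
    fracKernel G s d a r ≤ (ρ / r) ^ (s * pp + d) * fracKernel G s d a ρ := by
  have hρ : 0 < ρ := hr.trans_le hrρ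
  have hle : 1 ≤ (ρ / r) ^ s := Real.one_le_rpow ((one_le_div hr).2 hrρ) hs
  have harg : (ρ / r) ^ s * (a / ρ ^ s) = a / r ^ s := by
    rw [Real.div_rpow hρ.le hr.le]
    field_simp
  have hrd := (Real.rpow_pos_of_pos hr d).ne'
  have hρd := (Real.rpow_pos_of_pos hρ d).ne'
  calc fracKernel G s d a r
      ≤ ((ρ / r) ^ s) ^ pp * G (a / ρ ^ s) / r ^ d := by
        rw [fracKernel, ← harg]
        gcongr
        exact hY.map_mul_le_rpow_mul_of_one_le hG hle (by positivity)
    _ = (ρ / r) ^ (s * pp + d) * fracKernel G s d a ρ := by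
        rw [fracKernel, Real.rpow_add (by positivity), ← Real.rpow_mul (by positivity),
          Real.div_rpow hρ.le hr.le d]
        field_simp

lemma IsYoungPair.fracKernel_le_rpow_mul_fracKernel_of_ge (hY : IsYoungPair G g)
    (hG : GrowthCond G g pm pp) (hs : 0 ≤ s) (ha : 0 ≤ a) (hr : 0 < r) (hrρ : r ≤ ρ) :
    fracKernel G s d a ρ ≤ (r / ρ) ^ (s * pm + d) * fracKernel G s d a r := by
  have hρ : 0 < ρ := hr.trans_le hrρ
  have hle : (r / ρ) ^ s ≤ 1 := Real.rpow_le_one (by positivity) ((div_le_one hρ).2 hrρ) hs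
  have harg : (r / ρ) ^ s * (a / r ^ s) = a / ρ ^ s := by
    rw [Real.div_rpow hr.le hρ.le]
    field_simp
  have hrd := (Real.rpow_pos_of_pos hr d).ne'
  have hρd := (Real.rpow_pos_of_pos hρ d).ne'
  calc fracKernel G s d a ρ
      ≤ ((r / ρ) ^ s) ^ pm * G (a / r ^ s) / ρ ^ d := by
        rw [fracKernel, ← harg]
        gcongr
        exact hY.map_mul_le_rpow_mul_of_le_one hG (by positivity) hle (by positivity)
    _ = (r / ρ) ^ (s * pm + d) * fracKernel G s d a r := by
        rw [fracKernel, Real.rpow_add (by positivity), ← Real.rpow_mul (by positivity),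
          Real.div_rpow hr.le hρ.le d]
        field_simp

lemma IsYoungPair.fracKernel_le_lintegral (hY : IsYoungPair G g) (hG : GrowthCond G g pm pp)
    (hs : 0 ≤ s) (hd : 0 ≤ d) (ha : 0 ≤ a) (hr : 0 < r) :
    ENNReal.ofReal (fracKernel G s d a r) ≤ ENNReal.ofReal (2 ^ (s * pp + (d + 1))) *
      ∫⁻ ρ in Ioi r, ENNReal.ofReal (fracKernel G s (d + 1) a ρ) := by
  have hpp : 0 ≤ s * pp := mul_nonneg hs (by linarith [hG.1, hG.2.1])
  calc ENNReal.ofReal (fracKernel G s d a r)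
      = ∫⁻ _ρ in Ioc r (2 * r), ENNReal.ofReal (fracKernel G s (d + 1) a r) := by
        rw [setLIntegral_const, Real.volume_Ioc,
          ← ENNReal.ofReal_mul (hY.fracKernel_nonneg ha hr.le), fracKernel_add_one hr]
        congr 1
        field_simp
        ring
    _ ≤ ∫⁻ ρ in Ioc r (2 * r), ENNReal.ofReal (2 ^ (s * pp + (d + 1))) *
          ENNReal.ofReal (fracKernel G s (d + 1) a ρ) := by
        refine setLIntegral_mono' measurableSet_Ioc fun ρ hρ => ?_
        have hρ0 : 0 < ρ := hr.trans hρ.1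
        rw [← ENNReal.ofReal_mul (by positivity)]
        refine ENNReal.ofReal_le_ofReal
          ((hY.fracKernel_le_rpow_mul_fracKernel hG hs ha hr hρ.1.le).trans ?_)
        have := hY.fracKernel_nonneg (s := s) (d := d + 1) ha hρ0.le
        gcongr
        exact (div_le_iff₀ hr).2 hρ.2
    _ ≤ _ := by
        rw [lintegral_const_mul' _ _ ENNReal.ofReal_ne_top]
        gcongr
        exact Ioc_subset_Ioi_self

lemma IsYoungPair.lintegral_fracKernel_le (hY : IsYoungPair G g) (hG : GrowthCond G g pm pp)
    (hs : 0 ≤ s) (hd : 0 < d) (ha : 0 ≤ a) (hr : 0 < r) :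
    ∫⁻ ρ in Ioi r, ENNReal.ofReal (fracKernel G s (d + 1) a ρ) ≤
      ENNReal.ofReal (s * pm + d)⁻¹ * ENNReal.ofReal (fracKernel G s d a r) := by
  set q := s * pm + d with hq
  have hq0 : 0 < q := add_pos_of_nonneg_of_pos (mul_nonneg hs (by linarith [hG.1])) hd
  have hK := hY.fracKernel_nonneg (s := s) (d := d) ha hr.le
  calc ∫⁻ ρ in Ioi r, ENNReal.ofReal (fracKernel G s (d + 1) a ρ)
      ≤ ∫⁻ ρ in Ioi r, ENNReal.ofReal (fracKernel G s d a r * r ^ q) *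
          ENNReal.ofReal (ρ ^ (-q - 1)) := by
        refine setLIntegral_mono' measurableSet_Ioi fun ρ (hρ : r < ρ) => ?_
        have hρ0 : 0 < ρ := hr.trans hρ
        rw [← ENNReal.ofReal_mul (by positivity)]
        refine ENNReal.ofReal_le_ofReal
          ((hY.fracKernel_le_rpow_mul_fracKernel_of_ge hG hs ha hr hρ.le).trans_eq ?_)
        rw [← add_assoc, ← hq, Real.div_rpow hr.le hρ0.le, Real.rpow_add_one hr.ne',
          fracKernel_add_one hr, ← neg_add', Real.rpow_neg hρ0.le]
        field_simp
    _ = ENNReal.ofReal (fracKernel G s d a r * r ^ q) * ENNReal.ofReal (r ^ (-q) / q) := by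
        rw [lintegral_const_mul' _ _ ENNReal.ofReal_ne_top, ← ofReal_integral_eq_lintegral_ofReal
          (integrableOn_Ioi_rpow_of_lt (by linarith) hr)
          ((ae_restrict_mem measurableSet_Ioi).mono fun ρ hρ =>
            Real.rpow_nonneg (hr.trans hρ).le _),
          integral_Ioi_rpow_of_lt (by linarith) hr, sub_add_cancel, neg_div_neg_eq]
    _ = ENNReal.ofReal q⁻¹ * ENNReal.ofReal (fracKernel G s d a r) := by
        rw [← ENNReal.ofReal_mul (by positivity), ← ENNReal.ofReal_mul (by positivity),
          Real.rpow_neg hr.le]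
        field_simp

lemma IsYoungPair.lintegral_fracKernel_div_le (hY : IsYoungPair G g) (hG : GrowthCond G g pm pp)
    (hs : 0 ≤ s) (hd : 0 < d) (ha : 0 ≤ a) (hr : 0 < r) (hl : 1 ≤ l) :
    ∫⁻ ρ in Ioi (r / l), ENNReal.ofReal (fracKernel G s (d + 1) a ρ) ≤
      ENNReal.ofReal ((s * pm + d)⁻¹ * l ^ (s * pp + d)) *
        ENNReal.ofReal (fracKernel G s d a r) := by
  have : 0 < l := by linarith
  have hpm : 0 ≤ s * pm := mul_nonneg hs (by linarith [hG.1])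
  rw [ENNReal.ofReal_mul (by positivity), mul_assoc, ← ENNReal.ofReal_mul (by positivity)]
  refine (hY.lintegral_fracKernel_le hG hs hd ha (by positivity)).trans ?_
  gcongr
  refine (hY.fracKernel_le_rpow_mul_fracKernel hG hs ha (by positivity)
    (div_le_self hr.le hl)).trans_eq ?_
  rw [div_div_cancel₀ hr.ne']

end FracKernel

section Scales

lemma Ioi_div_eq_inter {r l : ℝ} (hr : 0 ≤ r) (hl : 0 < l) :
    Ioi (r / l) = {ρ | r < l * ρ} ∩ Ioi 0 := by
  ext ρ
  simp only [mem_Ioi, mem_inter_iff, mem_ofPred_eq, div_lt_iff₀' hl]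
  exact ⟨fun h => ⟨h, pos_of_mul_pos_right (hr.trans_lt h) hl.le⟩, And.left⟩

variable {X : Type*} [PseudoMetricSpace X] [MeasurableSpace X] [OpensMeasurableSpace X]
  [SecondCountableTopology X] {μ : Measure X} [SFinite μ] {G g : ℝ → ℝ} {u : X → ℝ}

lemma IsYoungPair.lintegral_lintegral_fracKernel_eq (hY : IsYoungPair G g) (hu : Measurable u)
    (s d : ℝ) {l : ℝ} (hl : 0 < l) :
    ∫⁻ p, (∫⁻ ρ in Ioi (dist p.1 p.2 / l),
        ENNReal.ofReal (fracKernel G s d |u p.1 - u p.2| ρ)) ∂(μ.prod μ) =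
      ∫⁻ ρ in Ioi 0, ENNReal.ofReal (ρ ^ d)⁻¹ *
        nearModular μ (fun a => G (a / ρ ^ s)) u (l * ρ) := by
  have hmeas : AEMeasurable (fun q : (X × X) × ℝ =>
      {q : (X × X) × ℝ | dist q.1.1 q.1.2 < l * q.2}.indicator
        (fun q => ENNReal.ofReal (fracKernel G s d |u q.1.1 - u q.1.2| q.2)) q)
      ((μ.prod μ).prod (volume.restrict (Ioi 0))) := by
    have hpos : ∀ᵐ q : (X × X) × ℝ ∂(μ.prod μ).prod (volume.restrict (Ioi 0)), 0 < q.2 :=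
      Measure.quasiMeasurePreserving_snd.ae (ae_restrict_mem measurableSet_Ioi)
    exact (hY.aemeasurable_fracKernel (by fun_prop) (by fun_prop)
      (.of_forall fun _ => abs_nonneg _) (hpos.mono fun _ => le_of_lt) s d).indicator
        (measurableSet_lt (by fun_prop) (by fun_prop))
  calc ∫⁻ p, (∫⁻ ρ in Ioi (dist p.1 p.2 / l),
        ENNReal.ofReal (fracKernel G s d |u p.1 - u p.2| ρ)) ∂(μ.prod μ)
      = ∫⁻ p, (∫⁻ ρ in Ioi 0, {ρ | dist p.1 p.2 < l * ρ}.indicator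
          (fun ρ => ENNReal.ofReal (fracKernel G s d |u p.1 - u p.2| ρ)) ρ) ∂(μ.prod μ) := by
        refine lintegral_congr fun p => ?_
        rw [Ioi_div_eq_inter dist_nonneg hl,
          setLIntegral_indicator (measurableSet_lt (by fun_prop) (by fun_prop))]
    _ = ∫⁻ ρ in Ioi 0, ∫⁻ p in {p : X × X | dist p.1 p.2 < l * ρ},
          ENNReal.ofReal (fracKernel G s d |u p.1 - u p.2| ρ) ∂(μ.prod μ) := by
        rw [lintegral_lintegral_swap hmeas]
        refine lintegral_congr fun ρ => ?_
        rw [← lintegral_indicator (measurableSet_dist_lt _)]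
        rfl
    _ = _ := by
        refine setLIntegral_congr_fun measurableSet_Ioi fun ρ (hρ : 0 < ρ) => ?_
        rw [nearModular, ← lintegral_const_mul' _ _ ENNReal.ofReal_ne_top]
        refine lintegral_congr fun p => ?_
        rw [← ENNReal.ofReal_mul (by positivity), fracKernel, div_eq_inv_mul _ (ρ ^ d)]

end Scales

section Comparison

variable {N : ℕ} {s : ℝ} {G g : ℝ → ℝ} {pm pp : ℝ} {u : EuclideanSpace ℝ (Fin N) → ℝ}

lemma fracSeminorm_eq_lintegral_fracKernel (A B : Set (EuclideanSpace ℝ (Fin N))) :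
    fracSeminorm s G u A B =
      ∫⁻ x in A, ∫⁻ y in B, ENNReal.ofReal (fracKernel G s N |u x - u y| (dist x y)) :=
  rfl

lemma IsYoungPair.fracSeminorm_univ_eq_lintegral_prod (hY : IsYoungPair G g) (hu : Measurable u) :
    fracSeminorm s G u univ univ =
      ∫⁻ p : EuclideanSpace ℝ (Fin N) × EuclideanSpace ℝ (Fin N),
        ENNReal.ofReal (fracKernel G s N |u p.1 - u p.2| (dist p.1 p.2)) := by
  simp only [fracSeminorm_eq_lintegral_fracKernel, Measure.restrict_univ]
  exact lintegral_lintegral (hY.aemeasurable_fracKernel (by fun_prop) (by fun_prop)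
    (.of_forall fun _ => abs_nonneg _) (.of_forall fun _ => dist_nonneg) s N)

lemma IsYoungPair.fracSeminorm_univ_le_lintegral_nearModular (hY : IsYoungPair G g)
    (hG : GrowthCond G g pm pp) (hs : 0 ≤ s) (hu : Measurable u) :
    fracSeminorm s G u univ univ ≤ ENNReal.ofReal (2 ^ (s * pp + (N + 1))) *
      ∫⁻ ρ in Ioi (0 : ℝ), ENNReal.ofReal (ρ ^ ((N : ℝ) + 1))⁻¹ *
        nearModular volume (fun a => G (a / ρ ^ s)) u ρ := by
  have h := hY.lintegral_lintegral_fracKernel_eq (μ := volume) hu s (N + 1) one_pos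
  simp only [div_one, one_mul] at h
  rw [hY.fracSeminorm_univ_eq_lintegral_prod hu, ← h,
    ← lintegral_const_mul' _ _ ENNReal.ofReal_ne_top]
  refine lintegral_mono fun p => ?_
  rcases eq_or_ne p.1 p.2 with hp | hp
  · rw [hp, sub_self, abs_zero, hY.fracKernel_zero, ENNReal.ofReal_zero]
    exact zero_le
  · exact hY.fracKernel_le_lintegral hG hs N.cast_nonneg (abs_nonneg _) (dist_pos.2 hp)

variable [NeZero N]

lemma IsYoungPair.lintegral_nearModular_le_fracSeminorm_univ (hY : IsYoungPair G g)
    (hG : GrowthCond G g pm pp) (hs : 0 ≤ s) (hu : Measurable u) {l : ℝ} (hl : 1 ≤ l) :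
    ∫⁻ ρ in Ioi (0 : ℝ), ENNReal.ofReal (ρ ^ ((N : ℝ) + 1))⁻¹ *
        nearModular volume (fun a => G (a / ρ ^ s)) u (l * ρ) ≤
      ENNReal.ofReal ((s * pm + N)⁻¹ * l ^ (s * pp + N)) * fracSeminorm s G u univ univ := by
  rw [← hY.lintegral_lintegral_fracKernel_eq hu s (N + 1) (by linarith),
    hY.fracSeminorm_univ_eq_lintegral_prod hu, ← lintegral_const_mul' _ _ ENNReal.ofReal_ne_top]
  refine lintegral_mono fun p => ?_
  rcases eq_or_ne p.1 p.2 with hp | hp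
  · simp [hp, hY.fracKernel_zero]
  · exact hY.lintegral_fracKernel_div_le hG hs (Nat.cast_pos.2 (NeZero.pos N)) (abs_nonneg _)
      (dist_pos.2 hp) hl

lemma exists_fracSeminorm_rearrangeFun_le (N : ℕ) [NeZero N] (hs : 0 ≤ s)
    (hY : IsYoungPair G g) (hG : GrowthCond G g pm pp) :
    ∃ C : ℝ≥0∞, C ≠ ⊤ ∧ ∀ u : EuclideanSpace ℝ (Fin N) → ℝ, Measurable u → (∀ x, 0 ≤ u x) →
      BddAbove (range u) → volume {x | 0 < u x} ≠ ⊤ →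
      fracSeminorm s G (rearrangeFun u) univ univ ≤ C * fracSeminorm s G u univ univ := by
  have hl : 1 ≤ dilationFactor N + 2 := by linarith [one_le_dilationFactor (NeZero.ne N)]
  refine ⟨ENNReal.ofReal (2 ^ (s * pp + (N + 1))) *
    ENNReal.ofReal ((s * pm + N)⁻¹ * (dilationFactor N + 2) ^ (s * pp + N)), by finiteness,
    fun u hu hu0 hbdd hfin => ?_⟩
  refine (hY.fracSeminorm_univ_le_lintegral_nearModular hG hs
    (measurable_rearrangeFun hbdd hfin)).trans ?_
  rw [mul_assoc]
  gcongr
  refine le_trans (setLIntegral_mono' measurableSet_Ioi fun ρ (hρ : 0 < ρ) => ?_)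
    (hY.lintegral_nearModular_le_fracSeminorm_univ hG hs hu hl)
  gcongr
  exact hY.nearModular_div_rearrangeFun_le hu hu0 hbdd hfin hρ (Real.rpow_pos_of_pos hρ s)

end Comparison

section Decomposition

variable {N : ℕ} {s : ℝ} {G g : ℝ → ℝ} {u : EuclideanSpace ℝ (Fin N) → ℝ}
  {A B Ω : Set (EuclideanSpace ℝ (Fin N))}

lemma fracSeminorm_mono {A' B' : Set (EuclideanSpace ℝ (Fin N))} (hA : A ⊆ A') (hB : B ⊆ B') :
    fracSeminorm s G u A B ≤ fracSeminorm s G u A' B' :=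
  (lintegral_mono fun _ => lintegral_mono_set hB).trans (lintegral_mono_set hA)

lemma IsYoungPair.fracSeminorm_comm (hY : IsYoungPair G g) (hu : Measurable u) :
    fracSeminorm s G u A B = fracSeminorm s G u B A := by
  simp only [fracSeminorm_eq_lintegral_fracKernel]
  rw [lintegral_lintegral_swap (hY.aemeasurable_fracKernel (by fun_prop) (by fun_prop)
    (.of_forall fun _ => abs_nonneg _) (.of_forall fun _ => dist_nonneg) s N)]
  simp only [abs_sub_comm, dist_comm]

lemma fracSeminorm_add_compl_left (hΩ : MeasurableSet Ω) :
    fracSeminorm s G u Ω B + fracSeminorm s G u Ωᶜ B = fracSeminorm s G u univ B := by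
  simp only [fracSeminorm, Measure.restrict_univ, lintegral_add_compl _ hΩ]

lemma IsYoungPair.fracSeminorm_add_compl_right (hY : IsYoungPair G g) (hu : Measurable u)
    (hΩ : MeasurableSet Ω) :
    fracSeminorm s G u A Ω + fracSeminorm s G u A Ωᶜ = fracSeminorm s G u A univ := by
  rw [hY.fracSeminorm_comm hu, hY.fracSeminorm_comm (A := A) (B := Ωᶜ) hu,
    fracSeminorm_add_compl_left hΩ, hY.fracSeminorm_comm hu]

lemma IsYoungPair.fracSeminorm_eq_zero (hY : IsYoungPair G g) (hA : MeasurableSet A)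
    (huA : ∀ x ∈ A, u x = 0) : fracSeminorm s G u A A = 0 := by
  refine setLIntegral_eq_zero hA fun x hx => setLIntegral_eq_zero hA fun y hy => ?_
  simp [huA x hx, huA y hy, hY.map_zero]

lemma IsYoungPair.fracSeminorm_univ_eq_add (hY : IsYoungPair G g) (hu : Measurable u)
    (hΩ : MeasurableSet Ω) (huΩ : ∀ x ∉ Ω, u x = 0) :
    fracSeminorm s G u univ univ = fracSeminorm s G u Ω Ω + 2 * fracSeminorm s G u Ω Ωᶜ := by
  rw [← fracSeminorm_add_compl_left hΩ, ← hY.fracSeminorm_add_compl_right hu hΩ,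
    ← hY.fracSeminorm_add_compl_right hu hΩ, hY.fracSeminorm_eq_zero hΩ.compl huΩ, add_zero,
    hY.fracSeminorm_comm hu (A := Ωᶜ), two_mul, add_assoc]

end Decomposition

section Extension

lemma infDist_frontier_pos {X : Type*} [PseudoMetricSpace X] [PreconnectedSpace X] {U : Set X}
    (hU : IsOpen U) (hU' : U ≠ univ) {x : X} (hx : x ∈ U) : 0 < infDist x (frontier U) := by
  refine (isClosed_frontier.notMem_iff_infDist_pos (nonempty_frontier_iff.2 ⟨⟨x, hx⟩, hU'⟩)).1 ?_
  rw [hU.frontier_eq]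
  exact fun h => h.2 hx

lemma infDist_frontier_le_dist {E : Type*} [NormedAddCommGroup E] [NormedSpace ℝ E]
    [FiniteDimensional ℝ E] {U : Set E} {x y : E} (hx : x ∈ U) (hy : y ∉ U) :
    infDist x (frontier U) ≤ dist x y := by
  obtain ⟨z, hz, hdist⟩ :=
    exists_mem_frontier_infDist_compl_eq_dist hx fun h => hy (h ▸ mem_univ y)
  exact (infDist_le_dist_of_mem hz).trans (hdist ▸ infDist_le_dist_of_mem hy)

variable {N : ℕ} {s : ℝ} {G g : ℝ → ℝ} {pm pp : ℝ} {u : EuclideanSpace ℝ (Fin N) → ℝ}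
  {Ω : Set (EuclideanSpace ℝ (Fin N))}

lemma IsYoungPair.fracKernel_le_mul_rpow_neg (hY : IsYoungPair G g) (hG : GrowthCond G g pm pp)
    (hs : 0 ≤ s) {a d δ r : ℝ} (ha : 0 ≤ a) (hδ : 0 < δ) (hδr : δ ≤ r) :
    fracKernel G s d a r ≤ G (a / δ ^ s) * δ ^ (s * pm) * r ^ (-(d + s * pm)) := by
  have hr : 0 < r := hδ.trans_le hδr
  refine (hY.fracKernel_le_rpow_mul_fracKernel_of_ge hG hs ha hδ hδr).trans_eq ?_
  have hδd := (Real.rpow_pos_of_pos hδ d).ne'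
  rw [fracKernel, Real.div_rpow hδ.le hr.le, add_comm d, Real.rpow_neg hr.le, Real.rpow_add hδ]
  field_simp

lemma IsYoungPair.lintegral_compl_fracKernel_le (hY : IsYoungPair G g)
    (hG : GrowthCond G g pm pp) (hs : 0 ≤ s) (hΩopen : IsOpen Ω) {c₁ a : ℝ} (ha : 0 ≤ a)
    {x : EuclideanSpace ℝ (Fin N)} (hx : x ∈ Ω)
    (hi : ∫⁻ y in Ωᶜ, ENNReal.ofReal (dist x y ^ (-((N : ℝ) + s * pm))) ≤
      ENNReal.ofReal (c₁ * infDist x (frontier Ω) ^ (-(s * pm)))) :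
    ∫⁻ y in Ωᶜ, ENNReal.ofReal (fracKernel G s N a (dist x y)) ≤
      ENNReal.ofReal c₁ * ENNReal.ofReal (G (a / infDist x (frontier Ω) ^ s)) := by
  rcases eq_or_ne Ω univ with rfl | hΩ
  · simp
  have hδ := infDist_frontier_pos hΩopen hΩ hx
  set δ := infDist x (frontier Ω)
  have hG0 : 0 ≤ G (a / δ ^ s) := hY.nonneg (by positivity)
  calc ∫⁻ y in Ωᶜ, ENNReal.ofReal (fracKernel G s N a (dist x y))
      ≤ ∫⁻ y in Ωᶜ, ENNReal.ofReal (G (a / δ ^ s) * δ ^ (s * pm)) *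
          ENNReal.ofReal (dist x y ^ (-((N : ℝ) + s * pm))) := by
        refine setLIntegral_mono' hΩopen.measurableSet.compl fun y hy => ?_
        rw [← ENNReal.ofReal_mul (by positivity)]
        exact ENNReal.ofReal_le_ofReal
          (hY.fracKernel_le_mul_rpow_neg hG hs ha hδ (infDist_frontier_le_dist hx hy))
    _ ≤ ENNReal.ofReal (G (a / δ ^ s) * δ ^ (s * pm)) *
          ENNReal.ofReal (c₁ * δ ^ (-(s * pm))) := by
        rw [lintegral_const_mul' _ _ ENNReal.ofReal_ne_top]
        gcongr
    _ = ENNReal.ofReal c₁ * ENNReal.ofReal (G (a / δ ^ s)) := by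
        rw [← ENNReal.ofReal_mul (by positivity), ← ENNReal.ofReal_mul' hG0, Real.rpow_neg hδ.le]
        congr 1
        field_simp

lemma IsYoungPair.fracSeminorm_univ_le (hY : IsYoungPair G g) (hG : GrowthCond G g pm pp)
    (hs : 0 ≤ s) (hΩopen : IsOpen Ω) {c₁ : ℝ}
    (hi : ∀ x ∈ Ω, ∫⁻ y in Ωᶜ, ENNReal.ofReal (dist x y ^ (-((N : ℝ) + s * pm))) ≤
      ENNReal.ofReal (c₁ * infDist x (frontier Ω) ^ (-(s * pm))))
    (hu : Measurable u) (hu0 : ∀ x, 0 ≤ u x) (huΩ : ∀ x ∉ Ω, u x = 0) :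
    fracSeminorm s G u univ univ ≤ fracSeminorm s G u Ω Ω + 2 * (ENNReal.ofReal c₁ *
      ∫⁻ x in Ω, ENNReal.ofReal (G (u x / infDist x (frontier Ω) ^ s))) := by
  rw [hY.fracSeminorm_univ_eq_add hu hΩopen.measurableSet huΩ,
    ← lintegral_const_mul' _ _ ENNReal.ofReal_ne_top]
  gcongr
  refine setLIntegral_mono' hΩopen.measurableSet fun x hx => ?_
  refine le_trans (setLIntegral_mono' hΩopen.measurableSet.compl fun y hy => ?_)
    (hY.lintegral_compl_fracKernel_le hG hs hΩopen (hu0 x) hx (hi x hx))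
  rw [huΩ y hy, sub_zero, abs_of_nonneg (hu0 x), fracKernel]

end Extension

namespace IsTestFun

variable {N : ℕ} {Ω : Set (EuclideanSpace ℝ (Fin N))} {u : EuclideanSpace ℝ (Fin N) → ℝ}

lemma eq_zero (hu : IsTestFun Ω u) : ∀ x ∉ Ω, u x = 0 := fun _ hx =>
  image_eq_zero_of_notMem_tsupport fun h => hx (hu.2.2 h)

lemma bddAbove_range (hu : IsTestFun Ω u) : BddAbove (range u) :=
  hu.1.continuous.bddAbove_range_of_hasCompactSupport hu.2.1

lemma volume_setOf_pos_ne_top (hu : IsTestFun Ω u) : volume {x | 0 < u x} ≠ ⊤ :=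
  measure_ne_top_of_subset (fun x (hx : 0 < u x) => subset_tsupport u hx.ne') hu.2.1.measure_ne_top

end IsTestFun

theorem rearrangement_bound_of_hardy_on_rearranged_set_general {N : ℕ} (hN : 1 ≤ N) {s : ℝ}
    (hs : 0 ≤ s) {G g : ℝ → ℝ} (hY : IsYoungPair G g) {pm pp : ℝ} (hG : GrowthCond G g pm pp)
    {Ω : Set (EuclideanSpace ℝ (Fin N))} (hΩopen : IsOpen Ω) {c₁ : ℝ}
    (hi : ∀ x ∈ Ω,
      (∫⁻ y in Ωᶜ, ENNReal.ofReal (dist x y ^ (-((N : ℝ) + s * pm)))) ≤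
        ENNReal.ofReal (c₁ * infDist x (frontier Ω) ^ (-(s * pm))))
    {c₂ : ℝ}
    (hii : ∀ u : EuclideanSpace ℝ (Fin N) → ℝ, IsTestFun Ω u → (∀ x, 0 ≤ u x) →
      (∫⁻ x in Ω, ENNReal.ofReal (G (u x / infDist x (frontier Ω) ^ s))) ≤
        ENNReal.ofReal c₂ * fracSeminorm s G u Ω Ω) :
    ∃ C > (0 : ℝ), ∀ u : EuclideanSpace ℝ (Fin N) → ℝ, IsTestFun Ω u → (∀ x, 0 ≤ u x) →
      fracSeminorm s G (rearrangeFun u) univ univ ≤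
        ENNReal.ofReal C * fracSeminorm s G u Ω Ω := by
  have : NeZero N := ⟨by lia⟩
  obtain ⟨C₀, hC₀, hrearr⟩ := exists_fracSeminorm_rearrangeFun_le N hs hY hG
  set C : ℝ≥0∞ := C₀ * (1 + 2 * (ENNReal.ofReal c₁ * ENNReal.ofReal c₂)) with hC
  have hCtop : C ≠ ⊤ := by finiteness
  refine ⟨C.toReal + 1, by positivity, fun u hu hu0 => ?_⟩
  have hmeas : Measurable u := hu.1.continuous.measurable
  calc fracSeminorm s G (rearrangeFun u) univ univ
      ≤ C₀ * fracSeminorm s G u univ univ :=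
        hrearr u hmeas hu0 hu.bddAbove_range hu.volume_setOf_pos_ne_top
    _ ≤ C₀ * (fracSeminorm s G u Ω Ω + 2 * (ENNReal.ofReal c₁ *
          (ENNReal.ofReal c₂ * fracSeminorm s G u Ω Ω))) := by
        gcongr
        refine (hY.fracSeminorm_univ_le hG hs hΩopen hi hmeas hu0 hu.eq_zero).trans ?_
        gcongr
        exact hii u hu hu0
    _ = C * fracSeminorm s G u Ω Ω := by rw [hC]; ring
    _ ≤ ENNReal.ofReal (C.toReal + 1) * fracSeminorm s G u Ω Ω := by
        gcongr
        exact (ENNReal.le_ofReal_iff_toReal_le hCtop (by positivity)).2 (by linarith)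

/-- rearrangement bound on `Ω* × Ω*` assuming the integral estimate for the
complement kernel and the fractional Orlicz–Hardy inequality on `Ω`. -/
theorem rearrangement_bound_of_hardy_on_rearranged_set
    {N : ℕ} (hN : 1 ≤ N) {s : ℝ} (hs : s ∈ Set.Ioo (0 : ℝ) 1)
    {G g : ℝ → ℝ} (hY : IsYoungPair G g) {pm pp : ℝ} (hG : GrowthCond G g pm pp)
    {Ω : Set (EuclideanSpace ℝ (Fin N))} (hΩopen : IsOpen Ω) (hΩne : Ω.Nonempty)
    (hΩfin : volume Ω < ⊤)
    {c₁ : ℝ} (hc₁ : 0 < c₁)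
    (hi : ∀ x ∈ Ω,
      (∫⁻ y in Ωᶜ, ENNReal.ofReal (dist x y ^ (-((N : ℝ) + s * pm)))) ≤
        ENNReal.ofReal (c₁ * infDist x (frontier Ω) ^ (-(s * pm))))
    {c₂ : ℝ} (hc₂ : 0 < c₂)
    (hii : ∀ u : EuclideanSpace ℝ (Fin N) → ℝ, IsTestFun Ω u → (∀ x, 0 ≤ u x) →
      (∫⁻ x in Ω, ENNReal.ofReal (G (u x / infDist x (frontier Ω) ^ s))) ≤
        ENNReal.ofReal c₂ * fracSeminorm s G u Ω Ω) :
    ∃ C > (0 : ℝ), ∀ u : EuclideanSpace ℝ (Fin N) → ℝ, IsTestFun Ω u → (∀ x, 0 ≤ u x) →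
      fracSeminorm s G (rearrangeFun u) (rearrangeSet Ω) (rearrangeSet Ω) ≤
        ENNReal.ofReal C * fracSeminorm s G u Ω Ω := by
  obtain ⟨C, hC, h⟩ :=
    rearrangement_bound_of_hardy_on_rearranged_set_general hN hs.1.le hY hG hΩopen hi hii
  exact ⟨C, hC, fun u hu hu0 =>
    (fracSeminorm_mono (subset_univ _) (subset_univ _)).trans (h u hu hu0)⟩
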